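/- Let Φ be an N-function, Ψ := Φ* its complementary function, 1 < p < ∞ and p' := p/(p−1). Then lim_{t→∞} Φ(t)/|t|^p = 0 if and only if lim_{t→∞} Ψ(t)/|t|^{p'} = ∞. -/

import Mathlib

/-!
The proof uses `(p - 1)(p' - 1) = 1`, equivalently `p (p' - 1) = p'`, and no biconjugation.

If `Φ s ≤ ε s ^ p` for large `s`, testing the supremum defining `Ψ t` at `s = c t ^ (p' - 1)` gives
`Ψ t ≥ (c - ε c ^ p) t ^ p'`; taking `c = 2M` and `ε = M / c ^ p` makes the factor equal to `M`.

Conversely, a supporting line of `Φ` at `s`, of slope `t`, gives the equality case of Young's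
inequality in the form `Φ s + Ψ t ≤ s t` (`exists_slope_conjN_le`). The slope satisfies
`t ≥ Φ s / s`, so it is large when `s` is. If `Ψ t ≥ K ^ (p' - 1) t ^ p'` for large `t`, then
`Ψ t ≤ s t` yields `(K t) ^ (p' - 1) ≤ s`, that is `K t ≤ s ^ (p - 1)`, and `Φ s ≤ s t` yields
`K Φ s ≤ s ^ p`.
-/

open MeasureTheory Filter Real Set
open scoped RealInnerProductSpace ENNReal Topology

noncomputable section

/-- An N-function: an even convex function `Φ : ℝ → [0,∞)` vanishing exactly at `0`,
with `Φ(t)/t → 0` as `t → 0` and `Φ(t)/t → ∞` as `t → ∞`. -/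
def IsNFunction (Φ : ℝ → ℝ) : Prop :=
  (∀ t, Φ (-t) = Φ t) ∧ ConvexOn ℝ Set.univ Φ ∧ (∀ t, 0 ≤ Φ t) ∧
  (∀ t, Φ t = 0 ↔ t = 0) ∧
  Tendsto (fun t => Φ t / t) (𝓝[≠] (0:ℝ)) (𝓝 0) ∧
  Tendsto (fun t => Φ t / t) atTop atTop

/-- The complementary function `Φ*(t) = sup { s|t| - Φ(s) : s ≥ 0 }` of an N-function. -/
def conjN (Φ : ℝ → ℝ) (t : ℝ) : ℝ := sSup ((fun s => s * |t| - Φ s) '' Set.Ici (0:ℝ))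

/-- The superlinear growth of `Φ` makes the supremum defining `conjN Φ t` finite. -/
lemma bddAbove_conjN {Φ : ℝ → ℝ} (hΦ : IsNFunction Φ) (t : ℝ) :
    BddAbove ((fun s => s * |t| - Φ s) '' Set.Ici (0:ℝ)) := by
  obtain ⟨-, -, hnn, -, -, hinf⟩ := hΦ
  obtain ⟨S, hS⟩ := eventually_atTop.1 (hinf.eventually_ge_atTop |t|)
  refine ⟨|S| * |t|, ?_⟩
  rintro _ ⟨s, hs, rfl⟩
  have hs0 : 0 ≤ s := hs
  have h2 : 0 ≤ |S| * |t| := by positivity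
  have h3 := hnn s
  dsimp only
  rcases le_or_gt s |S| with h | h
  · nlinarith [mul_le_mul_of_nonneg_right h (abs_nonneg t)]
  · have h1 := hS s ((le_abs_self S).trans h.le)
    rw [le_div_iff₀ ((abs_nonneg S).trans_lt h)] at h1
    linarith

/-- Equality case of Young's inequality (only the nontrivial half): at a point `s > 0` a supporting
slope `t` of `Φ` satisfies `Φ s + Φ* t ≤ s t`. -/
lemma exists_slope_conjN_le {Φ : ℝ → ℝ} (hΦ : IsNFunction Φ) {s : ℝ} (hs : 0 < s) :
    ∃ t, Φ s / s ≤ t ∧ Φ s + conjN Φ t ≤ s * t := by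
  obtain ⟨-, hc, hnn, hz, -, -⟩ := hΦ
  have hmem : s ∈ interior (Set.univ : Set ℝ) := by simp
  have hsupp : ∀ u, Φ s + derivWithin Φ (Ioi s) s * (u - s) ≤ Φ u := by
    intro u
    rcases lt_trichotomy u s with h | h | h
    · have h1 := (hc.slope_le_leftDeriv_of_mem_interior (mem_univ u) hmem h).trans
        (hc.leftDeriv_le_rightDeriv_of_mem_interior hmem)
      rw [slope_def_field, div_le_iff₀ (by linarith)] at h1
      linarith
    · simp [h]
    · have h1 := hc.rightDeriv_le_slope_of_mem_interior hmem (mem_univ u) h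
      rw [slope_def_field, le_div_iff₀ (by linarith)] at h1
      linarith
  set t := derivWithin Φ (Ioi s) s
  have hle : Φ s / s ≤ t := by
    have h0 := hsupp 0
    rw [(hz 0).2 rfl] at h0
    rw [div_le_iff₀ hs]
    linarith
  have ht : 0 ≤ t := (div_nonneg (hnn s) hs.le).trans hle
  refine ⟨t, hle, ?_⟩
  have : conjN Φ t ≤ s * t - Φ s := by
    refine csSup_le (Set.nonempty_Ici.image _) ?_
    rintro _ ⟨u, -, rfl⟩
    have := hsupp u
    simp only [abs_of_nonneg ht]
    linarith
  linarith

/-- Lemma `lem:conj`, the `t → ∞` part: for an N-function `Φ` with complementary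
function `Ψ = Φ*`, and conjugate exponents `1 < p < ∞`, `p' = p/(p-1)`, one has
`lim_{t→∞} Φ(t)/|t|^p = 0` iff `lim_{t→∞} Ψ(t)/|t|^{p'} = ∞`. -/
theorem limit_at_infty_conj (Φ Ψ : ℝ → ℝ) (p p' : ℝ)
    (hΦ : IsNFunction Φ) (hΨ : Ψ = conjN Φ)
    (hp : 1 < p) (hp' : p' = p / (p - 1)) :
    Tendsto (fun t => Φ t / |t| ^ p) atTop (𝓝 0) ↔
      Tendsto (fun t => Ψ t / |t| ^ p') atTop atTop := by
  subst hΨ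
  have hp1 : 0 < p - 1 := by linarith
  have hq : 0 < p' - 1 := by rw [hp', sub_pos, lt_div_iff₀ hp1]; linarith
  have hqp : (p' - 1) * (p - 1) = 1 := by rw [hp']; field_simp; ring
  have hqp' : (p' - 1) * p = p' := by linarith
  constructor
  · intro h
    rw [tendsto_atTop]
    intro M₀
    set M := max M₀ 1
    have hM : 0 < M := lt_of_lt_of_le one_pos (le_max_right _ _)
    have hc : (0:ℝ) < 2 * M := by linarith
    have hcp : 0 < (2 * M) ^ p := rpow_pos_of_pos hc p
    have hs : Tendsto (fun t : ℝ => 2 * M * t ^ (p' - 1)) atTop atTop :=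
      (tendsto_rpow_atTop hq).const_mul_atTop hc
    have hev := hs.eventually (h.eventually_le_const (div_pos hM hcp))
    filter_upwards [hev, eventually_gt_atTop 0] with t ht ht0
    refine (le_max_left M₀ 1).trans ?_
    have hspos : 0 < 2 * M * t ^ (p' - 1) := mul_pos hc (rpow_pos_of_pos ht0 _)
    have h1 : 2 * M * t ^ (p' - 1) * |t| - Φ (2 * M * t ^ (p' - 1)) ≤ conjN Φ t :=
      le_csSup (bddAbove_conjN hΦ t) ⟨_, hspos.le, rfl⟩
    rw [abs_of_pos hspos, div_le_iff₀ (rpow_pos_of_pos hspos _),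
      mul_rpow hc.le (rpow_nonneg ht0.le _), ← rpow_mul ht0.le, hqp', ← mul_assoc,
      div_mul_cancel₀ _ hcp.ne'] at ht
    have h2 : t ^ (p' - 1) * t = t ^ p' := by
      rw [← rpow_add_one ht0.ne', sub_add_cancel]
    rw [abs_of_pos ht0] at h1 ⊢
    rw [le_div_iff₀ (rpow_pos_of_pos ht0 _)]
    rw [mul_assoc, h2] at h1
    linarith
  · intro h
    rw [Metric.tendsto_nhds]
    intro ε hε
    set K := 2 / ε with hKdef
    have hK : 0 < K := by positivity
    obtain ⟨T, hT⟩ := eventually_atTop.1 (h.eventually_ge_atTop (K ^ (p' - 1)))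
    have hinf := hΦ.2.2.2.2.2
    filter_upwards [eventually_gt_atTop 0, hinf.eventually_ge_atTop (max T 1)] with s hs hsT
    obtain ⟨t, hst, hY⟩ := exists_slope_conjN_le hΦ hs
    have htT : T ≤ t := (le_max_left _ _).trans (hsT.trans hst)
    have ht : 0 < t := one_pos.trans_le ((le_max_right _ _).trans (hsT.trans hst))
    have hΦs := hΦ.2.2.1 s
    have h1 := hT t htT
    rw [abs_of_pos ht, le_div_iff₀ (rpow_pos_of_pos ht _)] at h1
    have h2 : t ^ (p' - 1) * t = t ^ p' := by
      rw [← rpow_add_one ht.ne', sub_add_cancel]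
    have h3 : (K * t) ^ (p' - 1) ≤ s := by
      rw [mul_rpow hK.le ht.le]
      refine le_of_mul_le_mul_right ?_ ht
      rw [mul_assoc, h2]
      linarith
    have h4 : K * t ≤ s ^ (p - 1) := by
      have := rpow_le_rpow (by positivity) h3 hp1.le
      rwa [← rpow_mul (by positivity), hqp, rpow_one] at this
    have h5 : s ^ (p - 1) * s = s ^ p := by
      rw [← rpow_add_one hs.ne', sub_add_cancel]
    have hΦt : Φ s ≤ t * s := (div_le_iff₀ hs).1 hst
    have h6 : K * Φ s ≤ s ^ p := by
      rw [← h5]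
      calc K * Φ s ≤ K * (t * s) := by gcongr
        _ = K * t * s := by ring
        _ ≤ _ := by gcongr
    have hsp : 0 < s ^ p := rpow_pos_of_pos hs p
    rw [Real.dist_eq, sub_zero, abs_of_pos hs, abs_of_nonneg (div_nonneg hΦs hsp.le),
      div_lt_iff₀ hsp]
    have h7 : ε * (K * Φ s) = 2 * Φ s := by rw [hKdef]; field_simp
    nlinarith [mul_le_mul_of_nonneg_left h6 hε.le, mul_pos hε hsp]
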